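/- Fix u > 0 and define R_c(u,v) = Γ(c+u,v)/Γ(u,v) for c > 0 and v ≥ 0, where Γ(u,v) is the upper incomplete gamma function. Then the function (c,v) ↦ R_c(u,v) is strictly totally positive of order infinity: for every r ≥ 1 and all c₁ > c₂ > ⋯ > c_r > 0 and v₁ > v₂ > ⋯ > v_r ≥ 0, the r×r determinant det( (R_{c_i}(u,v_j))_{i,j=1}^r ) is strictly positive. -/

import Mathlib

open MeasureTheory

/-- The upper incomplete gamma function `Γ(u,v) = ∫_v^∞ x^(u-1) e^(-x) dx`. -/
noncomputable def upperGamma (u v : ℝ) : ℝ :=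
  ∫ x in Set.Ioi v, x ^ (u - 1) * Real.exp (-x)

/-!
The kernel `exp (s * t)` is strictly totally positive: dividing the columns of a minor by its first
row and subtracting neighbouring columns leaves a minor of size one less, whose entries are
integrals of the same kernel over consecutive intervals, and the determinant of a matrix of
integrals is the integral of the determinant. The substitution `t ↦ log t` and positive factors
turn `exp (s * t)` into the integrand `t ^ (s - 1) * exp (-t)`. Subtracting neighbouring columns
again, one sees that strict total positivity passes from a kernel `K s t` to its tail integrals
`∫ t in Ioi v, K s t`, here `Γ(s, v)`, and dividing by `Γ(u, v) > 0` only rescales the columns.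
-/

open Set

theorem det_eq_det_succ_sub_castSucc {R : Type*} [CommRing R] {n : ℕ}
    (M : Matrix (Fin (n + 1)) (Fin (n + 1)) R) (hM : ∀ j, M 0 j = 1) :
    M.det = Matrix.det (Matrix.of fun i j : Fin n => M i.succ j.succ - M i.succ j.castSucc) := by
  let D : Matrix (Fin (n + 1)) (Fin (n + 1)) R :=
    Matrix.of fun i => Fin.cons (M i 0) fun k => M i k.succ - M i k.castSucc
  have hD : M.det = D.det :=
    Matrix.det_eq_of_forall_col_eq_smul_add_pred (fun _ => 1) (by simp [D]) (by simp [D])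
  have hrow_zero : D 0 0 = 1 := hM 0
  have hrow_succ : ∀ k : Fin n, D 0 k.succ = 0 := fun k => by simp [D, hM]
  have hminor : D.submatrix Fin.succ Fin.succ =
      Matrix.of fun i j => M i.succ j.succ - M i.succ j.castSucc := rfl
  rw [hD, Matrix.det_succ_row_zero, Fin.sum_univ_succ]
  simp [hrow_zero, hrow_succ, hminor]

section IntegralOfDeterminant

variable {ι : Type*} [Fintype ι] [DecidableEq ι] {X : ι → Type*} [∀ j, MeasurableSpace (X j)]
  {μ : ∀ j, Measure (X j)} [∀ j, SigmaFinite (μ j)]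

theorem integrable_det {𝕜 : Type*} [RCLike 𝕜] {f : ι → ∀ j, X j → 𝕜}
    (hf : ∀ i j, Integrable (f i j) (μ j)) :
    Integrable (fun x : ∀ j, X j => Matrix.det (Matrix.of fun i j => f i j (x j)))
      (Measure.pi μ) := by
  simp only [Matrix.det_apply', Matrix.of_apply]
  exact integrable_finsetSum _ fun σ _ =>
    (Integrable.fintype_prod_dep fun j => hf (σ j) j).const_mul _

theorem integral_det {𝕜 : Type*} [RCLike 𝕜] {f : ι → ∀ j, X j → 𝕜}
    (hf : ∀ i j, Integrable (f i j) (μ j)) :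
    ∫ x : ∀ j, X j, Matrix.det (Matrix.of fun i j => f i j (x j)) ∂Measure.pi μ =
      Matrix.det (Matrix.of fun i j => ∫ x, f i j x ∂μ j) := by
  simp only [Matrix.det_apply', Matrix.of_apply]
  rw [integral_finsetSum _ fun σ _ =>
    (Integrable.fintype_prod_dep fun j => hf (σ j) j).const_mul _]
  simp only [integral_const_mul, integral_fintype_prod_eq_prod]

theorem setIntegral_pos_of_forall_pos {Y : Type*} [MeasurableSpace Y] {ν : Measure Y} {s : Set Y}
    {g : Y → ℝ} (hs : MeasurableSet s) (hνs : ν s ≠ 0) (hg : IntegrableOn g s ν)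
    (hpos : ∀ y ∈ s, 0 < g y) : 0 < ∫ y in s, g y ∂ν := by
  have hsupport : s ⊆ Function.support g := fun y hy => (hpos y hy).ne'
  rw [setIntegral_pos_iff_support_of_nonneg_ae _ hg]
  · rw [inter_eq_self_of_subset_right hsupport]
    exact pos_of_ne_zero hνs
  · filter_upwards [ae_restrict_mem hs] with y hy using (hpos y hy).le

theorem det_setIntegral_pos {f : ι → ∀ j, X j → ℝ} {S : ∀ j, Set (X j)}
    (hS : ∀ j, MeasurableSet (S j)) (hμS : ∀ j, μ j (S j) ≠ 0)
    (hf : ∀ i j, IntegrableOn (f i j) (S j) (μ j))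
    (hpos : ∀ x : ∀ j, X j, (∀ j, x j ∈ S j) → 0 < Matrix.det (Matrix.of fun i j => f i j (x j))) :
    0 < Matrix.det (Matrix.of fun i j => ∫ x in S j, f i j x ∂μ j) := by
  rw [← integral_det hf, ← Measure.restrict_pi_pi]
  refine setIntegral_pos_of_forall_pos (MeasurableSet.univ_pi hS) ?_ ?_
    fun x hx => hpos x fun j => hx j (mem_univ j)
  · rw [Measure.pi_pi]
    exact Finset.prod_ne_zero_iff.2 fun j _ => hμS j
  · rw [IntegrableOn, Measure.restrict_pi_pi]
    exact integrable_det hf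

end IntegralOfDeterminant

/-- Strict total positivity of infinite order of the kernel `K` on `A × B`: all minors of `K` with
rows indexed by `A` and columns indexed by `B` are positive. Indices are listed in decreasing order,
which gives the same minors as listing them in increasing order. -/
def StrictTotallyPositiveOn {α β : Type*} [Preorder α] [Preorder β] (K : α → β → ℝ)
    (A : Set α) (B : Set β) : Prop :=
  ∀ ⦃n : ℕ⦄ ⦃a : Fin n → α⦄ ⦃b : Fin n → β⦄, StrictAnti a → StrictAnti b →
    (∀ i, a i ∈ A) → (∀ j, b j ∈ B) → 0 < Matrix.det (Matrix.of fun i j => K (a i) (b j))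

namespace StrictTotallyPositiveOn

variable {α β γ δ : Type*} [Preorder α] [Preorder β] [Preorder γ] [Preorder δ]
  {K : α → β → ℝ} {A : Set α} {B : Set β}

theorem pos (hK : StrictTotallyPositiveOn K A B) {a : α} {b : β} (ha : a ∈ A) (hb : b ∈ B) :
    0 < K a b := by
  simpa using hK (n := 1) (a := fun _ => a) (b := fun _ => b) (Subsingleton.strictAnti _)
    (Subsingleton.strictAnti _) (fun _ => ha) (fun _ => hb)

theorem congr (hK : StrictTotallyPositiveOn K A B) {L : α → β → ℝ}
    (h : ∀ a ∈ A, ∀ b ∈ B, L a b = K a b) : StrictTotallyPositiveOn L A B := by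
  intro n a b ha hb haA hbB
  simpa only [h _ (haA _) _ (hbB _)] using hK ha hb haA hbB

theorem comp (hK : StrictTotallyPositiveOn K A B) {φ : γ → α} {ψ : δ → β} {C : Set γ} {D : Set δ}
    (hφ : StrictMonoOn φ C) (hφA : MapsTo φ C A) (hψ : StrictMonoOn ψ D) (hψB : MapsTo ψ D B) :
    StrictTotallyPositiveOn (fun c d => K (φ c) (ψ d)) C D :=
  fun _ _ _ hc hd hcC hdD =>
    hK (fun _ _ hij => hφ (hcC _) (hcC _) (hc hij)) (fun _ _ hij => hψ (hdD _) (hdD _) (hd hij))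
      (fun i => hφA (hcC i)) (fun j => hψB (hdD j))

theorem mul_right (hK : StrictTotallyPositiveOn K A B) {g : β → ℝ} (hg : ∀ b ∈ B, 0 < g b) :
    StrictTotallyPositiveOn (fun a b => K a b * g b) A B := by
  intro n a b ha hb haA hbB
  have hdet := Matrix.det_mul_row (fun j => g (b j)) (Matrix.of fun i j => K (a i) (b j))
  simp only [Matrix.of_apply] at hdet
  simp only [mul_comm (K _ _), hdet]
  exact mul_pos (Finset.prod_pos fun j _ => hg _ (hbB j)) (hK ha hb haA hbB)

end StrictTotallyPositiveOn

section RaySlice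

variable {β : Type*} [LinearOrder β] {n : ℕ}

/-- For decreasing `v`, the pieces into which the points `v j` cut the ray above the smallest of
them: the unbounded one first, then the interval between each point and its predecessor. -/
def raySlice (v : Fin (n + 1) → β) : Fin (n + 1) → Set β :=
  Fin.cons (Ioi (v 0)) fun k => Ioc (v k.succ) (v k.castSucc)

theorem raySlice_subset_Ioi (v : Fin (n + 1) → β) (j : Fin (n + 1)) : raySlice v j ⊆ Ioi (v j) := by
  cases j using Fin.cases with
  | zero => exact subset_rfl
  | succ k => exact Ioc_subset_Ioi_self

theorem strictAnti_of_mem_raySlice {v t : Fin (n + 1) → β} (ht : ∀ j, t j ∈ raySlice v j) :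
    StrictAnti t :=
  Fin.strictAnti_iff_succ_lt.2 fun k =>
    (ht k.succ).2.trans_lt (raySlice_subset_Ioi v k.castSucc (ht k.castSucc))

variable [TopologicalSpace β] [MeasurableSpace β]

theorem measurableSet_raySlice [OrderClosedTopology β] [OpensMeasurableSpace β]
    (v : Fin (n + 1) → β) (j : Fin (n + 1)) : MeasurableSet (raySlice v j) := by
  cases j using Fin.cases with
  | zero => exact measurableSet_Ioi
  | succ k => exact measurableSet_Ioc

theorem measure_Ioc_pos [OrderTopology β] [DenselyOrdered β] (μ : Measure β) [μ.IsOpenPosMeasure]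
    {a b : β} (hab : a < b) : 0 < μ (Ioc a b) :=
  ((Measure.measure_Ioo_pos μ).2 hab).trans_le (measure_mono Ioo_subset_Ioc_self)

theorem measure_raySlice_pos [OrderTopology β] [DenselyOrdered β] [NoMaxOrder β] (μ : Measure β)
    [μ.IsOpenPosMeasure] {v : Fin (n + 1) → β} (hv : StrictAnti v) (j : Fin (n + 1)) :
    0 < μ (raySlice v j) := by
  cases j using Fin.cases with
  | zero => exact Measure.measure_Ioi_pos μ _
  | succ k => exact measure_Ioc_pos μ (hv k.castSucc_lt_succ)

end RaySlice

section TailIntegral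

variable {β : Type*} [LinearOrder β] [TopologicalSpace β] [MeasurableSpace β]
  [OpensMeasurableSpace β] {μ : Measure β}

theorem setIntegral_Ioi_eq_Ioc_add_Ioi [OrderClosedTopology β] {E : Type*} [NormedAddCommGroup E]
    [NormedSpace ℝ E] {f : β → E} {a b : β} (hab : a ≤ b) (hf : IntegrableOn f (Ioi a) μ) :
    ∫ t in Ioi a, f t ∂μ = (∫ t in Ioc a b, f t ∂μ) + ∫ t in Ioi b, f t ∂μ := by
  rw [← Ioc_union_Ioi_eq_Ioi hab, setIntegral_union Ioc_disjoint_Ioi_same measurableSet_Ioi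
    (hf.mono_set Ioc_subset_Ioi_self) (hf.mono_set (Ioi_subset_Ioi hab))]

theorem det_setIntegral_Ioi_eq_det_setIntegral_raySlice [OrderClosedTopology β] {n : ℕ}
    {f : Fin (n + 1) → β → ℝ} {v : Fin (n + 1) → β} (hv : Antitone v)
    (hf : ∀ i j, IntegrableOn (f i) (Ioi (v j)) μ) :
    Matrix.det (Matrix.of fun i j => ∫ t in Ioi (v j), f i t ∂μ) =
      Matrix.det (Matrix.of fun i j => ∫ t in raySlice v j, f i t ∂μ) := by
  refine Matrix.det_eq_of_forall_col_eq_smul_add_pred (fun _ => 1) (fun i => ?_) fun i k => ?_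
  · simp only [Matrix.of_apply, raySlice, Fin.cons_zero]
  · simp only [Matrix.of_apply, raySlice, Fin.cons_succ, one_mul]
    exact setIntegral_Ioi_eq_Ioc_add_Ioi (hv k.castSucc_lt_succ.le) (hf i k.succ)

theorem StrictTotallyPositiveOn.setIntegral_Ioi [OrderTopology β] [DenselyOrdered β]
    [NoMaxOrder β] [μ.IsOpenPosMeasure] [SigmaFinite μ] {α : Type*} [Preorder α]
    {K : α → β → ℝ} {A : Set α} {b : β} (hK : StrictTotallyPositiveOn K A (Ioi b))
    (hint : ∀ a ∈ A, IntegrableOn (K a) (Ioi b) μ) :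
    StrictTotallyPositiveOn (fun a v => ∫ t in Ioi v, K a t ∂μ) A (Ici b) := by
  rintro (_ | n) a v ha hv haA hvb
  · simp
  have hintv : ∀ i j, IntegrableOn (K (a i)) (Ioi (v j)) μ := fun i j =>
    (hint _ (haA i)).mono_set (Ioi_subset_Ioi (hvb j))
  rw [det_setIntegral_Ioi_eq_det_setIntegral_raySlice hv.antitone hintv]
  refine det_setIntegral_pos (measurableSet_raySlice v) (fun j => (measure_raySlice_pos μ hv j).ne')
    (fun i j => (hintv i j).mono_set (raySlice_subset_Ioi v j)) fun t ht => ?_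
  exact hK ha (strictAnti_of_mem_raySlice ht) haA fun j =>
    (hvb j).trans_lt (raySlice_subset_Ioi v j (ht j))

end TailIntegral

section ExponentialKernel

theorem strictAnti_of_mem_Ioc_succ_castSucc {β : Type*} [Preorder β] {n : ℕ}
    {x : Fin (n + 1) → β} {t : Fin n → β} (hx : Antitone x)
    (ht : ∀ j, t j ∈ Ioc (x j.succ) (x j.castSucc)) : StrictAnti t := fun i j hij =>
  calc t j ≤ x j.castSucc := (ht j).2
    _ ≤ x i.succ := hx (Fin.succ_le_castSucc_iff.2 hij)
    _ < t i := (ht i).1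

theorem exp_mul_sub_exp_mul_eq_setIntegral (c : ℝ) {x y : ℝ} (hxy : x ≤ y) :
    Real.exp (c * x) - Real.exp (c * y) = -c * ∫ t in Ioc x y, Real.exp (c * t) := by
  rw [← intervalIntegral.integral_of_le hxy, neg_mul,
    intervalIntegral.mul_integral_comp_mul_left, integral_exp, neg_sub]

theorem det_exp_mul_eq_prod_mul_det_setIntegral {n : ℕ} (a : Fin (n + 1) → ℝ)
    {x : Fin (n + 1) → ℝ} (hx : Antitone x) :
    Matrix.det (Matrix.of fun i j => Real.exp (a i * x j)) =
      (∏ j, Real.exp (a 0 * x j)) * ((∏ i : Fin n, (a 0 - a i.succ)) *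
        Matrix.det (Matrix.of fun i j : Fin n =>
          ∫ t in Ioc (x j.succ) (x j.castSucc), Real.exp ((a i.succ - a 0) * t))) := by
  have hfactor : (Matrix.of fun i j => Real.exp (a i * x j)) = Matrix.of fun i j =>
      Real.exp (a 0 * x j) * (Matrix.of fun i j => Real.exp ((a i - a 0) * x j)) i j := by
    ext i j
    rw [Matrix.of_apply, Matrix.of_apply, Matrix.of_apply, ← Real.exp_add]
    ring_nf
  rw [hfactor, Matrix.det_mul_row, det_eq_det_succ_sub_castSucc _ (by simp),
    ← Matrix.det_mul_column]
  simp only [Matrix.of_apply,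
    exp_mul_sub_exp_mul_eq_setIntegral _ (hx (Fin.castSucc_lt_succ).le), neg_sub]

theorem strictTotallyPositiveOn_exp_mul :
    StrictTotallyPositiveOn (fun a x : ℝ => Real.exp (a * x)) univ univ := by
  intro n
  induction n with
  | zero => simp
  | succ n ih =>
    intro a x ha hx _ _
    rw [det_exp_mul_eq_prod_mul_det_setIntegral a hx.antitone]
    refine mul_pos (Finset.prod_pos fun j _ => Real.exp_pos _)
      (mul_pos (Finset.prod_pos fun i _ => sub_pos.2 (ha i.succ_pos)) ?_)
    refine det_setIntegral_pos (fun j => measurableSet_Ioc)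
      (fun j => (measure_Ioc_pos volume (hx j.castSucc_lt_succ)).ne')
      (fun i j => Continuous.integrableOn_Ioc (by fun_prop)) fun t ht => ?_
    have ha' : StrictAnti fun i : Fin n => a i.succ - a 0 := fun i j hij =>
      sub_lt_sub_right (ha (Fin.succ_lt_succ_iff.2 hij)) _
    exact ih ha' (strictAnti_of_mem_Ioc_succ_castSucc hx.antitone ht) (fun _ => mem_univ _)
      fun _ => mem_univ _

end ExponentialKernel

section UpperGamma

theorem strictTotallyPositiveOn_rpow :
    StrictTotallyPositiveOn (fun s t : ℝ => t ^ s) univ (Ioi 0) :=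
  (strictTotallyPositiveOn_exp_mul.comp (strictMonoOn_id (s := univ)) (mapsTo_univ _ _)
    Real.strictMonoOn_log (mapsTo_univ _ _)).congr fun s _ t ht => by
      rw [Real.rpow_def_of_pos ht, mul_comm, id]

theorem strictTotallyPositiveOn_upperGamma :
    StrictTotallyPositiveOn upperGamma (Ioi 0) (Ici 0) := by
  have hshift : StrictMonoOn (fun s : ℝ => s - 1) (Ioi 0) := fun _ _ _ _ h =>
    sub_lt_sub_right h 1
  have hintegrand :
      StrictTotallyPositiveOn (fun s t : ℝ => t ^ (s - 1) * Real.exp (-t)) (Ioi 0) (Ioi 0) :=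
    (strictTotallyPositiveOn_rpow.comp hshift (mapsTo_univ _ _) strictMonoOn_id
      (mapsTo_id _)).mul_right fun t _ => Real.exp_pos (-t)
  exact hintegrand.setIntegral_Ioi fun s hs => by
    simpa only [mul_comm] using Real.GammaIntegral_convergent hs

theorem stmt_6_general {u : ℝ} (hu : 0 < u) :
    StrictTotallyPositiveOn (fun c v => upperGamma (c + u) v / upperGamma u v)
      (Ioi (-u)) (Ici 0) := by
  have hadd : StrictMonoOn (fun c : ℝ => c + u) (Ioi (-u)) := fun _ _ _ _ h =>
    add_lt_add_left h u
  have hmaps : MapsTo (fun c : ℝ => c + u) (Ioi (-u)) (Ioi 0) := fun _ hc =>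
    mem_Ioi.2 (neg_lt_iff_pos_add.1 hc)
  exact (strictTotallyPositiveOn_upperGamma.comp hadd hmaps strictMonoOn_id
    (mapsTo_id _)).mul_right fun v hv => inv_pos.2 (strictTotallyPositiveOn_upperGamma.pos hu hv)

end UpperGamma

/-- For fixed `u > 0`, the function `(c,v) ↦ R_c(u,v) = Γ(c+u,v)/Γ(u,v)`
is strictly totally positive of order infinity for `c > 0` and `v ≥ 0`. -/
theorem stmt_6 (u : ℝ) (hu : 0 < u) :
    ∀ r : ℕ, 1 ≤ r → ∀ c v : Fin r → ℝ,
      (∀ i : Fin r, 0 < c i) → (∀ j : Fin r, 0 ≤ v j) →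
      (∀ i j : Fin r, i < j → c j < c i) →
      (∀ i j : Fin r, i < j → v j < v i) →
      0 < Matrix.det (Matrix.of fun i j : Fin r =>
        upperGamma (c i + u) (v j) / upperGamma u (v j)) :=
  fun _ _ _ _ hc hv hca hva =>
    stmt_6_general hu hca hva (fun i => (neg_lt_zero.2 hu).trans (hc i)) hv
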